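/- arXiv:2503.13148 — 2 statements merged into one kernel-verified Lean document; each statement's English description precedes it below -/
import Mathlib

section
/- Let μ be a probability measure on ℕ×ℕ and let (X₁,Y₁), (X₂,Y₂), (X₃,Y₃) be independent random pairs each with law μ. Assume p_{ab} > 0 for all a,b ∈ {0,1}, and let ρ_{S*} = 3·P((X₁−X₂)(Y₁−Y₃)>0 | S*) − 3·P((X₁−X₂)(Y₁−Y₃)<0 | S*). Then (p₁₁+p₁₀)·(p₁₁+p₀₁)·ρ_{S*} = p₁₁²·ρ_{S₁₁} + p₁₁·p₁₀·ρ_{S₁₀} + p₁₁·p₀₁·ρ_{S₀₁} + p₁₀·p₀₁·ρ_{S₀₀}. -/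
/-!
The four events `S11`, `S10`, `S01`, `S00` partition `Sstar` (`Pr_inter_Sstar`), so by the law of
total probability `P(S*) · ρ_{S*} = ∑ P(S_{ab}) · ρ_{S_{ab}}`. Each `S_{ab}` is a product event
whose first factor is `{X > 0, Y > 0}`, hence by independence `P(S_{ab})` is `p₁₁` times the
coefficient of `ρ_{S_{ab}}` in the claim (`Pr_S11`, ..., `Pr_S00`), and these coefficients sum to
`(p₁₁ + p₁₀)(p₁₁ + p₀₁)`. Dividing by `p₁₁ > 0` gives the identity.
-/

open MeasureTheory

namespace ZIS

/-- Sample space for three independent pairs `(X₁,Y₁), (X₂,Y₂), (X₃,Y₃)`. -/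
abbrev Ω₃ : Type := (ℕ × ℕ) × (ℕ × ℕ) × (ℕ × ℕ)

/-- Joint law of three independent pairs, each with law `μ`. -/
noncomputable def triple (μ : Measure (ℕ × ℕ)) : Measure Ω₃ := μ.prod (μ.prod μ)

def X₁ (ω : Ω₃) : ℕ := ω.1.1
def Y₁ (ω : Ω₃) : ℕ := ω.1.2
def X₂ (ω : Ω₃) : ℕ := ω.2.1.1
def Y₂ (ω : Ω₃) : ℕ := ω.2.1.2
def X₃ (ω : Ω₃) : ℕ := ω.2.2.1
def Y₃ (ω : Ω₃) : ℕ := ω.2.2.2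

/-- Probability of an event for the three independent pairs. -/
noncomputable def Pr (μ : Measure (ℕ × ℕ)) (A : Set Ω₃) : ℝ := (triple μ A).toReal

/-- Conditional probability `P(A | B)` for the three independent pairs. -/
noncomputable def cPr (μ : Measure (ℕ × ℕ)) (A B : Set Ω₃) : ℝ := Pr μ (A ∩ B) / Pr μ B

/-- The event `(X₁ - X₂)(Y₁ - Y₃) > 0` (concordance). -/
def Conc : Set Ω₃ := {ω | (X₁ ω < X₂ ω ∧ Y₁ ω < Y₃ ω) ∨ (X₂ ω < X₁ ω ∧ Y₃ ω < Y₁ ω)}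

/-- The event `(X₁ - X₂)(Y₁ - Y₃) < 0` (discordance). -/
def Disc : Set Ω₃ := {ω | (X₁ ω < X₂ ω ∧ Y₃ ω < Y₁ ω) ∨ (X₂ ω < X₁ ω ∧ Y₁ ω < Y₃ ω)}

/-- Spearman's rho: `ρ_S = 3·P((X₁−X₂)(Y₁−Y₃)>0) − 3·P((X₁−X₂)(Y₁−Y₃)<0)`. -/
noncomputable def rhoS (μ : Measure (ℕ × ℕ)) : ℝ := 3 * Pr μ Conc - 3 * Pr μ Disc

/-- Conditional Spearman's rho given the event `S`. -/
noncomputable def rhoCond (μ : Measure (ℕ × ℕ)) (S : Set Ω₃) : ℝ :=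
  3 * cPr μ Conc S - 3 * cPr μ Disc S

/-- `p₁₁ = P(X > 0, Y > 0)`. -/
noncomputable def p11 (μ : Measure (ℕ × ℕ)) : ℝ := (μ {z : ℕ × ℕ | 0 < z.1 ∧ 0 < z.2}).toReal
/-- `p₁₀ = P(X > 0, Y = 0)`. -/
noncomputable def p10 (μ : Measure (ℕ × ℕ)) : ℝ := (μ {z : ℕ × ℕ | 0 < z.1 ∧ z.2 = 0}).toReal
/-- `p₀₁ = P(X = 0, Y > 0)`. -/
noncomputable def p01 (μ : Measure (ℕ × ℕ)) : ℝ := (μ {z : ℕ × ℕ | z.1 = 0 ∧ 0 < z.2}).toReal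
/-- `p₀₀ = P(X = 0, Y = 0)`. -/
noncomputable def p00 (μ : Measure (ℕ × ℕ)) : ℝ := (μ {z : ℕ × ℕ | z.1 = 0 ∧ z.2 = 0}).toReal

/-- `S* = {X₁>0, Y₁>0, X₂>0, Y₃>0}`. -/
def Sstar : Set Ω₃ := {ω | 0 < X₁ ω ∧ 0 < Y₁ ω ∧ 0 < X₂ ω ∧ 0 < Y₃ ω}
def S11 : Set Ω₃ := Sstar ∩ {ω | 0 < X₃ ω ∧ 0 < Y₂ ω}
def S10 : Set Ω₃ := Sstar ∩ {ω | 0 < X₃ ω ∧ Y₂ ω = 0}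
def S01 : Set Ω₃ := Sstar ∩ {ω | X₃ ω = 0 ∧ 0 < Y₂ ω}
def S00 : Set Ω₃ := Sstar ∩ {ω | X₃ ω = 0 ∧ Y₂ ω = 0}

/-- `p₁* = P(X₁ > X₂ | X₁>0, Y₁=0, X₂>0, Y₂>0)`. -/
noncomputable def p1star (μ : Measure (ℕ × ℕ)) : ℝ :=
  cPr μ {ω | X₂ ω < X₁ ω} {ω | 0 < X₁ ω ∧ Y₁ ω = 0 ∧ 0 < X₂ ω ∧ 0 < Y₂ ω}
/-- `p₁† = P(X₁ = X₂ | X₁>0, Y₁=0, X₂>0, Y₂>0)`. -/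
noncomputable def p1dag (μ : Measure (ℕ × ℕ)) : ℝ :=
  cPr μ {ω | X₁ ω = X₂ ω} {ω | 0 < X₁ ω ∧ Y₁ ω = 0 ∧ 0 < X₂ ω ∧ 0 < Y₂ ω}
/-- `p₂* = P(Y₁ > Y₂ | X₁=0, Y₁>0, X₂>0, Y₂>0)`. -/
noncomputable def p2star (μ : Measure (ℕ × ℕ)) : ℝ :=
  cPr μ {ω | Y₂ ω < Y₁ ω} {ω | X₁ ω = 0 ∧ 0 < Y₁ ω ∧ 0 < X₂ ω ∧ 0 < Y₂ ω}
/-- `p₂† = P(Y₁ = Y₂ | X₁=0, Y₁>0, X₂>0, Y₂>0)`. -/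
noncomputable def p2dag (μ : Measure (ℕ × ℕ)) : ℝ :=
  cPr μ {ω | Y₁ ω = Y₂ ω} {ω | X₁ ω = 0 ∧ 0 < Y₁ ω ∧ 0 < X₂ ω ∧ 0 < Y₂ ω}

/-- Marginal CDF of the first component. -/
noncomputable def F (μ : Measure (ℕ × ℕ)) (x : ℕ) : ℝ := (μ {z : ℕ × ℕ | z.1 ≤ x}).toReal
/-- Marginal CDF of the second component. -/
noncomputable def G (μ : Measure (ℕ × ℕ)) (y : ℕ) : ℝ := (μ {z : ℕ × ℕ | z.2 ≤ y}).toReal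

/-- The joint CDF equals the upper Fréchet–Hoeffding bound `min(F(x), G(y))`. -/
def Comonotone (μ : Measure (ℕ × ℕ)) : Prop :=
  ∀ x y : ℕ, (μ {z : ℕ × ℕ | z.1 ≤ x ∧ z.2 ≤ y}).toReal = min (F μ x) (G μ y)

/-- The joint CDF equals the lower Fréchet–Hoeffding bound `max(F(x) + G(y) − 1, 0)`. -/
def Countermonotone (μ : Measure (ℕ × ℕ)) : Prop :=
  ∀ x y : ℕ, (μ {z : ℕ × ℕ | z.1 ≤ x ∧ z.2 ≤ y}).toReal = max (F μ x + G μ y - 1) 0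

/-- `w(x, y) = 1 − F(x) − G(y)`. -/
noncomputable def w (μ : Measure (ℕ × ℕ)) (x y : ℕ) : ℝ := 1 - F μ x - G μ y

/-- By independence, the probability of a product event is the product of the probabilities. -/
lemma Pr_rect (μ : Measure (ℕ × ℕ)) [IsProbabilityMeasure μ] (A B C : Set (ℕ × ℕ)) :
    Pr μ (A ×ˢ B ×ˢ C) = (μ A).toReal * ((μ B).toReal * (μ C).toReal) := by
  simp [Pr, triple, Measure.prod_prod, ENNReal.toReal_mul]

lemma Pr_union (μ : Measure (ℕ × ℕ)) [IsProbabilityMeasure μ] {A B : Set Ω₃}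
    (h : Disjoint A B) : Pr μ (A ∪ B) = Pr μ A + Pr μ B := by
  have : IsProbabilityMeasure (triple μ) := by unfold triple; infer_instance
  exact measureReal_union h (Set.to_countable B).measurableSet

lemma Pr_S11 (μ : Measure (ℕ × ℕ)) [IsProbabilityMeasure μ] :
    Pr μ S11 = p11 μ * (p11 μ * p11 μ) := by
  unfold p11
  rw [← Pr_rect]
  congr 1
  ext ω
  simp only [S11, Sstar, X₁, X₂, X₃, Y₁, Y₂, Y₃, Set.mem_inter_iff, Set.mem_ofPred_eq, Set.mem_prod]
  tauto

lemma Pr_S10 (μ : Measure (ℕ × ℕ)) [IsProbabilityMeasure μ] :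
    Pr μ S10 = p11 μ * (p10 μ * p11 μ) := by
  unfold p11 p10
  rw [← Pr_rect]
  congr 1
  ext ω
  simp only [S10, Sstar, X₁, X₂, X₃, Y₁, Y₂, Y₃, Set.mem_inter_iff, Set.mem_ofPred_eq, Set.mem_prod]
  tauto

lemma Pr_S01 (μ : Measure (ℕ × ℕ)) [IsProbabilityMeasure μ] :
    Pr μ S01 = p11 μ * (p11 μ * p01 μ) := by
  unfold p11 p01
  rw [← Pr_rect]
  congr 1
  ext ω
  simp only [S01, Sstar, X₁, X₂, X₃, Y₁, Y₂, Y₃, Set.mem_inter_iff, Set.mem_ofPred_eq, Set.mem_prod]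
  tauto

lemma Pr_S00 (μ : Measure (ℕ × ℕ)) [IsProbabilityMeasure μ] :
    Pr μ S00 = p11 μ * (p10 μ * p01 μ) := by
  unfold p11 p10 p01
  rw [← Pr_rect]
  congr 1
  ext ω
  simp only [S00, Sstar, X₁, X₂, X₃, Y₁, Y₂, Y₃, Set.mem_inter_iff, Set.mem_ofPred_eq, Set.mem_prod]
  tauto

/-- The four events `S11`, `S10`, `S01`, `S00` partition `Sstar`, so they split the probability
of every event inside `Sstar`. -/
lemma Pr_inter_Sstar (μ : Measure (ℕ × ℕ)) [IsProbabilityMeasure μ] (E : Set Ω₃) :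
    Pr μ (E ∩ Sstar)
      = Pr μ (E ∩ S11) + Pr μ (E ∩ S10) + Pr μ (E ∩ S01) + Pr μ (E ∩ S00) := by
  rw [← Pr_union, ← Pr_union, ← Pr_union]
  · congr 1
    ext ω
    have hx := Nat.eq_zero_or_pos (X₃ ω)
    have hy := Nat.eq_zero_or_pos (Y₂ ω)
    simp only [S11, S10, S01, S00, Set.mem_inter_iff, Set.mem_union, Set.mem_ofPred_eq]
    tauto
  all_goals
    rw [Set.disjoint_left]
    intro ω
    simp only [S11, S10, S01, S00, Set.mem_inter_iff, Set.mem_union, Set.mem_ofPred_eq]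
    grind

/-- Decomposition of the conditional Spearman's rho on `S*`:
`(p₁₁+p₁₀)·(p₁₁+p₀₁)·ρ_{S*} = p₁₁²·ρ_{S₁₁} + p₁₁·p₁₀·ρ_{S₁₀} + p₁₁·p₀₁·ρ_{S₀₁} + p₁₀·p₀₁·ρ_{S₀₀}`. -/
theorem rhoSstar_decomposition (μ : Measure (ℕ × ℕ)) [IsProbabilityMeasure μ]
    (h00 : 0 < p00 μ) (h01 : 0 < p01 μ) (h10 : 0 < p10 μ) (h11 : 0 < p11 μ) :
    (p11 μ + p10 μ) * (p11 μ + p01 μ) * rhoCond μ Sstar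
      = p11 μ ^ 2 * rhoCond μ S11 + p11 μ * p10 μ * rhoCond μ S10
        + p11 μ * p01 μ * rhoCond μ S01 + p10 μ * p01 μ * rhoCond μ S00 := by
  -- The total mass of `Sstar` factors as `p₁₁ (p₁₁ + p₁₀) (p₁₁ + p₀₁)`.
  have hS : Pr μ Sstar = p11 μ * ((p11 μ + p10 μ) * (p11 μ + p01 μ)) := by
    have h := Pr_inter_Sstar μ Set.univ
    simp only [Set.univ_inter, Pr_S11, Pr_S10, Pr_S01, Pr_S00] at h
    rw [h]
    ring
  simp only [rhoCond, cPr, Pr_inter_Sstar, hS, Pr_S11, Pr_S10, Pr_S01, Pr_S00]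
  have hx : p11 μ + p10 μ ≠ 0 := by positivity
  have hy : p11 μ + p01 μ ≠ 0 := by positivity
  field_simp
  ring

end ZIS
end

section
/- Let μ be a probability measure on ℕ×ℕ with marginal CDFs F, G and suppose μ is comonotone, i.e. μ({(a,b) : a ≤ x, b ≤ y}) = min(F(x), G(y)) for all x,y ∈ ℕ. Assume p₁ = F(0) ≤ p₂ = G(0) < 1, let s̃ ≥ 1 satisfy F(s̃−1) ≤ p₂ < F(s̃), and let ũ ≥ 1 satisfy G(ũ−1) < F(s̃) ≤ G(ũ). Let (X₁,Y₁), (X₂,Y₂), (X₃,Y₃) be independent with law μ. Then Spearman's rho of μ satisfies ρ_S = (1−p₂)³·ρ_{S₁₁} + 3·p₂·(1−p₂) + 3·(p₂−F(s̃−1))·( F(s̃)·(p₂ − G(ũ) − G(ũ−1)) + G(ũ)·G(ũ−1) ). -/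
/-!
Write `a(x) = E[sgn(x - X)]` and `b(y) = E[sgn(y - Y)]`. Conditioning on the first pair gives
`ρ_S = 3 ∫ a(X) b(Y) dμ` (`Pr_Conc_sub_Disc`). This holds for any finite measure, in particular for
the restriction `ν` of `μ` to the open quadrant, where it computes `(1 - p₂)³ ρ_{S₁₁}`, because
`S₁₁` is the cube of that quadrant (`Pr_inter_S11`).

Under comonotonicity the level `p₂ = G(0)` separates the two halves of `μ`: almost surely `X ≤ s`
on `{Y = 0}` and `X ≥ s` on `{Y > 0}`, so up to a null set the open quadrant is `{Y > 0}`. Only the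
atom of `X` at `s` is split, into a mass `d = p₂ - F(s-1)` with `Y = 0` and a mass
`e = F(s) - p₂` with `Y > 0`. With `a'`, `b'` the averaged signs for `ν`, this gives `ν`-a.e.
`a = a' + p₂ - d·1{X = s}` and `b = b' + p₂`. Since `∫ a' dν = ∫ b' dν = 0` by antisymmetry
(`integral_avg_swap`),

* `∫_{Y>0} a b = ∫ a' b' dν + p₂² (1 - p₂) - d ∫_{X=s, Y>0} b(Y)`,
* `∫_{Y=0} a b = (p₂ - 1) ∫_{Y=0} a = (1 - p₂) (p₂ (1 - p₂) - d e)`.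

Finally `b(y) = G(y) + G(y-1) - 1` for `y ≥ 1`, and `{X = s, Y > 0}` is up to a null set all of
`{0 < Y < u}` together with a mass `F(s) - G(u-1)` at `Y = u`, so the remaining integral telescopes
(`integral_avg_snd_fst_le`). On `{Y > 0}` the atom `{X = s}` is encoded as `{X ≤ s}`, and on
`{Y = 0}` as `{X ≥ s}`, which agree with it almost everywhere.
-/

open MeasureTheory

namespace ZIS

/-! ### Averaged signs -/

/-- The sign of `m - n` as a real number, for natural numbers `m` and `n`. -/
noncomputable def sg (m n : ℕ) : ℝ := if n < m then 1 else if m < n then -1 else 0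

lemma sg_swap (m n : ℕ) : sg m n = -sg n m := by
  unfold sg; split_ifs <;> first | omega | norm_num

lemma abs_sg_le (m n : ℕ) : |sg m n| ≤ 1 := by
  unfold sg; split_ifs <;> norm_num

lemma integrable_of_abs_le {α : Type*} [MeasurableSpace α] [DiscreteMeasurableSpace α]
    (ν : Measure α) [IsFiniteMeasure ν] (f : α → ℝ) (C : ℝ)
    (h : ∀ z, |f z| ≤ C) : Integrable f ν :=
  Integrable.of_bound (Measurable.of_discrete.aestronglyMeasurable) C
    (Filter.Eventually.of_forall h)

/-- `E[sgn(m - X)]`, where `X` is the value of `g` under the finite measure `ν`. -/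
noncomputable def avg (ν : Measure (ℕ × ℕ)) (g : ℕ × ℕ → ℕ) (m : ℕ) : ℝ := ∫ w, sg m (g w) ∂ν

lemma abs_avg_le (ν : Measure (ℕ × ℕ)) [IsFiniteMeasure ν] (g : ℕ × ℕ → ℕ) (m : ℕ) :
    |avg ν g m| ≤ ν.real Set.univ := by
  have := norm_integral_le_of_norm_le_const (μ := ν) (f := fun w => sg m (g w)) (C := 1)
    (Filter.Eventually.of_forall fun w => abs_sg_le _ _)
  simpa [avg] using this

lemma integrable_sg (ν : Measure (ℕ × ℕ)) [IsFiniteMeasure ν] (g : ℕ × ℕ → ℕ) (m : ℕ) :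
    Integrable (fun w => sg m (g w)) ν :=
  integrable_of_abs_le _ _ 1 fun _ => abs_sg_le _ _

lemma integrable_avg (ν ν' : Measure (ℕ × ℕ)) [IsFiniteMeasure ν] [IsFiniteMeasure ν']
    (g : ℕ × ℕ → ℕ) : Integrable (fun z => avg ν g (g z)) ν' :=
  integrable_of_abs_le _ _ _ fun _ => abs_avg_le _ _ _

lemma avg_add (ν ν' : Measure (ℕ × ℕ)) [IsFiniteMeasure ν] [IsFiniteMeasure ν']
    (g : ℕ × ℕ → ℕ) (m : ℕ) : avg (ν + ν') g m = avg ν g m + avg ν' g m :=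
  integral_add_measure (integrable_sg _ _ _) (integrable_sg _ _ _)

/-- Antisymmetry of the sign kernel, combined with Fubini. -/
lemma integral_avg_swap (ν ν' : Measure (ℕ × ℕ)) [IsFiniteMeasure ν] [IsFiniteMeasure ν']
    (g : ℕ × ℕ → ℕ) : ∫ z, avg ν g (g z) ∂ν' = -∫ z, avg ν' g (g z) ∂ν := by
  unfold avg
  rw [integral_integral_swap
    (integrable_of_abs_le (ν'.prod ν) (Function.uncurry fun z w => sg (g z) (g w)) 1
      fun _ => abs_sg_le _ _), ← integral_neg]
  congr 1; ext z
  rw [← integral_neg]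
  congr 1; ext w
  exact sg_swap _ _

lemma integral_avg_self (ν : Measure (ℕ × ℕ)) [IsFiniteMeasure ν]
    (g : ℕ × ℕ → ℕ) : ∫ z, avg ν g (g z) ∂ν = 0 := by
  have := integral_avg_swap ν ν g
  linarith

/-! ### Concordance, discordance and the event `S₁₁` -/

/-- Concordance minus discordance as the integral of a product of averaged signs: given the
first pair, the second abscissa and the third ordinate are independent. -/
lemma Pr_Conc_sub_Disc (ν : Measure (ℕ × ℕ)) [IsFiniteMeasure ν] :
    Pr ν Conc - Pr ν Disc = ∫ z, avg ν Prod.fst z.1 * avg ν Prod.snd z.2 ∂ν := by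
  have hfin : IsFiniteMeasure (triple ν) := by unfold triple; infer_instance
  have key : ∀ ω : Ω₃, Conc.indicator (fun _ => (1 : ℝ)) ω - Disc.indicator (fun _ => (1 : ℝ)) ω
      = sg ω.1.1 ω.2.1.1 * sg ω.1.2 ω.2.2.2 := by
    intro ω
    have hC : ω ∈ Conc ↔
        (ω.1.1 < ω.2.1.1 ∧ ω.1.2 < ω.2.2.2) ∨ (ω.2.1.1 < ω.1.1 ∧ ω.2.2.2 < ω.1.2) := Iff.rfl
    have hD : ω ∈ Disc ↔
        (ω.1.1 < ω.2.1.1 ∧ ω.2.2.2 < ω.1.2) ∨ (ω.2.1.1 < ω.1.1 ∧ ω.1.2 < ω.2.2.2) := Iff.rfl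
    rcases lt_trichotomy ω.1.1 ω.2.1.1 with h | h | h <;>
      rcases lt_trichotomy ω.1.2 ω.2.2.2 with h' | h' | h' <;>
      simp [Set.indicator, hC, hD, sg, h, h', not_lt_of_gt]
  have hC : Pr ν Conc = ∫ ω, Conc.indicator (fun _ => (1 : ℝ)) ω ∂(triple ν) := by
    rw [integral_indicator_const _ (MeasurableSet.of_discrete)]; simp [Pr, Measure.real]
  have hD : Pr ν Disc = ∫ ω, Disc.indicator (fun _ => (1 : ℝ)) ω ∂(triple ν) := by
    rw [integral_indicator_const _ (MeasurableSet.of_discrete)]; simp [Pr, Measure.real]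
  have hb : ∀ (A : Set Ω₃) ω, |A.indicator (fun _ => (1 : ℝ)) ω| ≤ 1 := by
    intro A ω; by_cases h : ω ∈ A <;> simp [h]
  rw [hC, hD, ← integral_sub (integrable_of_abs_le _ _ 1 (hb _)) (integrable_of_abs_le _ _ 1 (hb _))]
  simp_rw [key]
  unfold triple
  rw [integral_prod]
  · congr 1; ext z
    exact integral_prod_mul (fun w : ℕ × ℕ => sg z.1 w.1) (fun w : ℕ × ℕ => sg z.2 w.2)
  · refine integrable_of_abs_le _ _ 1 fun ω => ?_
    rw [abs_mul]
    exact mul_le_one₀ (abs_sg_le _ _) (abs_nonneg _) (abs_sg_le _ _)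

/-- `S₁₁` asks that all three pairs lie in the open quadrant, so intersecting with it amounts to
restricting `μ` to that quadrant. -/
lemma Pr_inter_S11 (μ : Measure (ℕ × ℕ)) [IsFiniteMeasure μ] (A : Set Ω₃) :
    Pr μ (A ∩ S11) = Pr (μ.restrict {z | 0 < z.1 ∧ 0 < z.2}) A := by
  have : S11 = {z : ℕ × ℕ | 0 < z.1 ∧ 0 < z.2} ×ˢ
      ({z : ℕ × ℕ | 0 < z.1 ∧ 0 < z.2} ×ˢ {z : ℕ × ℕ | 0 < z.1 ∧ 0 < z.2}) := by
    ext ω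
    simp only [S11, Sstar, X₁, X₂, X₃, Y₁, Y₂, Y₃, Set.mem_inter_iff, Set.mem_ofPred_eq,
      Set.mem_prod]
    tauto
  unfold Pr triple
  rw [Measure.prod_restrict, Measure.prod_restrict,
    Measure.restrict_apply MeasurableSet.of_discrete, this]

lemma Pr_S11_s13 (μ : Measure (ℕ × ℕ)) [IsFiniteMeasure μ] :
    Pr μ S11 = ((μ.restrict {z | 0 < z.1 ∧ 0 < z.2}).real Set.univ) ^ 3 := by
  rw [← Set.univ_inter S11, Pr_inter_S11]
  unfold Pr triple
  simp only [← Set.univ_prod_univ (α := ℕ × ℕ), Measure.prod_prod, ENNReal.toReal_mul,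
    Measure.real]
  ring

lemma integral_ite (ν : Measure (ℕ × ℕ)) [IsFiniteMeasure ν] (p : ℕ × ℕ → Prop)
    [DecidablePred p] : ∫ z, (if p z then (1 : ℝ) else 0) ∂ν = ν.real {z | p z} := by
  have := integral_indicator_const (μ := ν) (1 : ℝ)
    (MeasurableSet.of_discrete (s := {z | p z}))
  simpa [Set.indicator] using this

lemma integrable_ite (ν : Measure (ℕ × ℕ)) [IsFiniteMeasure ν] (p : ℕ × ℕ → Prop)
    [DecidablePred p] : Integrable (fun z => if p z then (1 : ℝ) else 0) ν :=
  integrable_of_abs_le _ _ 1 fun z => by split_ifs <;> norm_num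

/-! ### Null sets and masses under comonotonicity -/

section Comonotone

variable {μ : Measure (ℕ × ℕ)} [IsProbabilityMeasure μ]

lemma Comonotone.real_left (h : Comonotone μ) (x y : ℕ) :
    μ.real {z | z.1 ≤ x ∧ y < z.2} = F μ x - min (F μ x) (G μ y) := by
  have h1 := measureReal_inter_add_sdiff (μ := μ) (s := {z : ℕ × ℕ | z.1 ≤ x})
    (MeasurableSet.of_discrete (s := {z : ℕ × ℕ | z.2 ≤ y}))
  have h2 : {z : ℕ × ℕ | z.1 ≤ x} ∩ {z : ℕ × ℕ | z.2 ≤ y} = {z | z.1 ≤ x ∧ z.2 ≤ y} := rfl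
  have h3 : {z : ℕ × ℕ | z.1 ≤ x} \ {z : ℕ × ℕ | z.2 ≤ y} = {z | z.1 ≤ x ∧ y < z.2} := by
    ext z; simp
  have h4 : μ.real {z | z.1 ≤ x ∧ z.2 ≤ y} = min (F μ x) (G μ y) := h x y
  have h5 : μ.real {z | z.1 ≤ x} = F μ x := rfl
  rw [h2, h3] at h1
  linarith

lemma Comonotone.real_right (h : Comonotone μ) (x y : ℕ) :
    μ.real {z | x < z.1 ∧ z.2 ≤ y} = G μ y - min (F μ x) (G μ y) := by
  have h1 := measureReal_inter_add_sdiff (μ := μ) (s := {z : ℕ × ℕ | z.2 ≤ y})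
    (MeasurableSet.of_discrete (s := {z : ℕ × ℕ | z.1 ≤ x}))
  have h2 : {z : ℕ × ℕ | z.2 ≤ y} ∩ {z : ℕ × ℕ | z.1 ≤ x} = {z | z.1 ≤ x ∧ z.2 ≤ y} := by
    ext z; simp [and_comm]
  have h3 : {z : ℕ × ℕ | z.2 ≤ y} \ {z : ℕ × ℕ | z.1 ≤ x} = {z | x < z.1 ∧ z.2 ≤ y} := by
    ext z; simp [and_comm]
  have h4 : μ.real {z | z.1 ≤ x ∧ z.2 ≤ y} = min (F μ x) (G μ y) := h x y
  have h5 : μ.real {z | z.2 ≤ y} = G μ y := rfl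
  rw [h2, h3] at h1
  linarith

lemma Comonotone.ae_left (h : Comonotone μ) {x y : ℕ} (hxy : F μ x ≤ G μ y) :
    ∀ᵐ z ∂μ, z.1 ≤ x → z.2 ≤ y := by
  have h1 := h.real_left x y
  rw [min_eq_left hxy, sub_self, measureReal_eq_zero_iff] at h1
  rw [ae_iff]
  convert h1 using 2
  ext z; simp

lemma Comonotone.ae_right (h : Comonotone μ) {x y : ℕ} (hxy : G μ y ≤ F μ x) :
    ∀ᵐ z ∂μ, z.2 ≤ y → z.1 ≤ x := by
  have h1 := h.real_right x y
  rw [min_eq_right hxy, sub_self, measureReal_eq_zero_iff] at h1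
  rw [ae_iff]
  convert h1 using 2
  ext z; simp [and_comm]

end Comonotone

/-! ### Averaged sign of `Y` on the atom of `X` -/

lemma avg_snd_zero (μ : Measure (ℕ × ℕ)) [IsProbabilityMeasure μ] :
    avg μ Prod.snd 0 = G μ 0 - 1 := by
  have : ∀ w : ℕ × ℕ, sg 0 w.2 = (if w.2 ≤ 0 then (1 : ℝ) else 0) - 1 := by
    intro w; unfold sg; split_ifs <;> first | omega | norm_num
  unfold avg
  simp_rw [this]
  rw [integral_sub (integrable_ite _ _) (integrable_const _), integral_ite]
  simp [G, Measure.real]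

lemma avg_snd_succ (μ : Measure (ℕ × ℕ)) [IsProbabilityMeasure μ] (k : ℕ) :
    avg μ Prod.snd (k + 1) = G μ k + G μ (k + 1) - 1 := by
  have : ∀ w : ℕ × ℕ, sg (k + 1) w.2
      = (if w.2 ≤ k then (1 : ℝ) else 0) + (if w.2 ≤ k + 1 then (1 : ℝ) else 0) - 1 := by
    intro w; unfold sg; split_ifs <;> first | omega | norm_num
  unfold avg
  simp_rw [this]
  rw [integral_sub ((integrable_ite _ _).fun_add (integrable_ite _ _)) (integrable_const _),
    integral_add (integrable_ite _ _) (integrable_ite _ _), integral_ite, integral_ite]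
  simp [G, Measure.real]

lemma integrable_ite_mul_avg (μ : Measure (ℕ × ℕ)) [IsProbabilityMeasure μ]
    (ν : Measure (ℕ × ℕ)) [IsFiniteMeasure ν] (p : ℕ × ℕ → Prop) [DecidablePred p] :
    Integrable (fun z => (if p z then (1 : ℝ) else 0) * avg μ Prod.snd z.2) ν := by
  refine integrable_of_abs_le _ _ (μ.real Set.univ) fun z => ?_
  split_ifs
  · simpa using abs_avg_le μ Prod.snd z.2
  · simp

/-- The summand at `Y = k + 1` is `(G(k+1) - G(k)) (G(k) + G(k+1) - 1)`, which telescopes. -/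
lemma integral_avg_snd_le (μ : Measure (ℕ × ℕ)) [IsProbabilityMeasure μ] (n : ℕ) :
    ∫ z, (if 0 < z.2 ∧ z.2 ≤ n then (1 : ℝ) else 0) * avg μ Prod.snd z.2 ∂μ
      = G μ n ^ 2 - G μ 0 ^ 2 - (G μ n - G μ 0) := by
  induction n with
  | zero =>
    have : ∀ z : ℕ × ℕ, ¬ (0 < z.2 ∧ z.2 ≤ 0) := fun z => by omega
    simp only [this, if_false, zero_mul, integral_zero]
    ring
  | succ n ih =>
    have : ∀ z : ℕ × ℕ, (if 0 < z.2 ∧ z.2 ≤ n + 1 then (1 : ℝ) else 0) * avg μ Prod.snd z.2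
        = (if 0 < z.2 ∧ z.2 ≤ n then (1 : ℝ) else 0) * avg μ Prod.snd z.2
          + ((if z.2 ≤ n + 1 then (1 : ℝ) else 0) - (if z.2 ≤ n then (1 : ℝ) else 0))
            * (G μ n + G μ (n + 1) - 1) := by
      intro z
      rcases Nat.lt_trichotomy z.2 (n + 1) with h | h | h
      · simp [show z.2 ≤ n + 1 by omega, show z.2 ≤ n by omega]
      · simp [h, avg_snd_succ]
      · simp [show ¬ z.2 ≤ n + 1 by omega, show ¬ z.2 ≤ n by omega]
    have hi : Integrable (fun z : ℕ × ℕ =>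
        (if z.2 ≤ n + 1 then (1 : ℝ) else 0) - (if z.2 ≤ n then (1 : ℝ) else 0)) μ :=
      (integrable_ite _ _).sub (integrable_ite _ _)
    simp_rw [this]
    rw [integral_add (integrable_ite_mul_avg μ μ _)
      (hi.mul_const _), ih,
      integral_mul_const, integral_sub (integrable_ite _ _) (integrable_ite _ _),
      integral_ite, integral_ite]
    have h1 : ∀ k, μ.real {z | z.2 ≤ k} = G μ k := fun _ => rfl
    rw [h1, h1]; ring

/-- The part of `{X ≤ s}` with `Y > 0` consists, up to a null set, of all of `{0 < Y < u}` and
of a mass `F(s) - G(u-1)` at `Y = u`. Here `t = u - 1`. -/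
lemma integral_avg_snd_fst_le (μ : Measure (ℕ × ℕ)) [IsProbabilityMeasure μ]
    (hcom : Comonotone μ) (s t : ℕ) (hul : G μ t < F μ s) (hur : F μ s ≤ G μ (t + 1)) :
    ∫ z in {z | 0 < z.2}, (if z.1 ≤ s then (1 : ℝ) else 0) * avg μ Prod.snd z.2 ∂μ
      = G μ t ^ 2 - G μ 0 ^ 2 - (G μ t - G μ 0)
        + (F μ s - G μ t) * (G μ t + G μ (t + 1) - 1) := by
  rw [← integral_indicator MeasurableSet.of_discrete]
  have : ∀ᵐ z ∂μ, Set.indicator {z : ℕ × ℕ | 0 < z.2}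
      (fun z => (if z.1 ≤ s then (1 : ℝ) else 0) * avg μ Prod.snd z.2) z
      = (if 0 < z.2 ∧ z.2 ≤ t then (1 : ℝ) else 0) * avg μ Prod.snd z.2
        + (if z.1 ≤ s ∧ t < z.2 then (1 : ℝ) else 0) * (G μ t + G μ (t + 1) - 1) := by
    filter_upwards [hcom.ae_left hur, hcom.ae_right hul.le] with z h1 h2
    simp only [Set.indicator, Set.mem_ofPred_eq]
    rcases Nat.lt_or_ge t z.2 with h | h
    · by_cases hz : z.1 ≤ s
      · have h3 : z.2 = t + 1 := by have := h1 hz; omega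
        simp [h3, hz, avg_snd_succ]
      · simp [hz, show ¬ z.2 ≤ t by omega]
    · by_cases h0 : 0 < z.2
      · simp [h0, h, h2 h, show ¬ t < z.2 by omega]
      · simp [show z.2 = 0 by omega]
  rw [integral_congr_ae this, integral_add (integrable_ite_mul_avg μ μ _)
    ((integrable_ite _ _).mul_const _), integral_avg_snd_le, integral_mul_const, integral_ite,
    hcom.real_left, min_eq_right hul.le]

/-! ### The value of Spearman's rho -/

/-- Attainable upper bound for Spearman's rho of zero-inflated count data:
under the comonotone coupling with `p₁ ≤ p₂ < 1`,
`ρ_S = (1−p₂)³·ρ_{S₁₁} + 3·p₂·(1−p₂) + 3·(p₂−F(s̃−1))·(F(s̃)·(p₂−G(ũ)−G(ũ−1)) + G(ũ)·G(ũ−1))`. -/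
theorem rhoS_comonotone_upper_bound (μ : Measure (ℕ × ℕ)) [IsProbabilityMeasure μ]
    (hcom : Comonotone μ) (p₁ p₂ : ℝ) (hp₁ : p₁ = F μ 0) (hp₂ : p₂ = G μ 0)
    (h12 : p₁ ≤ p₂) (h2 : p₂ < 1)
    (s : ℕ) (hs : 1 ≤ s) (hsl : F μ (s - 1) ≤ p₂) (hsr : p₂ < F μ s)
    (u : ℕ) (hu : 1 ≤ u) (hul : G μ (u - 1) < F μ s) (hur : F μ s ≤ G μ u) :
    rhoS μ = (1 - p₂) ^ 3 * rhoCond μ S11 + 3 * p₂ * (1 - p₂)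
      + 3 * (p₂ - F μ (s - 1))
        * (F μ s * (p₂ - G μ u - G μ (u - 1)) + G μ u * G μ (u - 1)) := by
  obtain ⟨r, rfl⟩ : ∃ r, s = r + 1 := ⟨s - 1, by omega⟩
  obtain ⟨t, rfl⟩ : ∃ t, u = t + 1 := ⟨u - 1, by omega⟩
  simp only [Nat.add_sub_cancel] at *
  subst hp₁ hp₂
  set p := G μ 0 with hp
  set ν := μ.restrict {z | 0 < z.2} with hν
  set ν₀ := μ.restrict {z | 0 < z.2}ᶜ with hν₀
  have hsum : ν + ν₀ = μ := Measure.restrict_add_restrict_compl MeasurableSet.of_discrete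
  have e0 : {z : ℕ × ℕ | 0 < z.2}ᶜ = {z | z.2 ≤ 0} := by ext z; simp
  have hmass₀ : ν₀.real Set.univ = p := by
    rw [hν₀, e0, measureReal_restrict_apply MeasurableSet.of_discrete, Set.univ_inter]; rfl
  have hmass : ν.real Set.univ = 1 - p := by
    have h := measureReal_add_apply (μ₁ := ν) (μ₂ := ν₀) (s := Set.univ)
    rw [hsum, hmass₀, probReal_univ] at h
    linarith
  -- The quantile level `p` separates `{Y = 0}`, where `X ≤ s`, from `{Y > 0}`, where `X ≥ s`.
  have hae : ∀ᵐ z ∂ν, 0 < z.2 ∧ r < z.1 := by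
    have h1 := hcom.ae_left hsl
    filter_upwards [ae_restrict_mem MeasurableSet.of_discrete, ae_restrict_of_ae h1] with z h3 h4
    have h5 : 0 < z.2 := h3
    exact ⟨h5, by by_contra h; have := h4 (by omega); omega⟩
  have hae₀ : ∀ᵐ z ∂ν₀, z.2 = 0 ∧ z.1 ≤ r + 1 := by
    have h1 := hcom.ae_right hsr.le
    filter_upwards [ae_restrict_mem MeasurableSet.of_discrete, ae_restrict_of_ae h1] with z h3 h4
    have h5 : ¬ 0 < z.2 := h3
    exact ⟨by omega, h4 (by omega)⟩
  have hquad : μ.restrict {z | 0 < z.1 ∧ 0 < z.2} = ν := by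
    apply Measure.restrict_congr_set
    filter_upwards [hcom.ae_left hsl] with z h1
    apply propext
    change (0 < z.1 ∧ 0 < z.2) ↔ 0 < z.2
    omega
  -- Masses of the two parts of the atom of `X` at `s`.
  have hd : ν₀.real {z | r < z.1} = p - F μ r := by
    rw [hν₀, e0, measureReal_restrict_apply MeasurableSet.of_discrete]
    have := hcom.real_right r 0
    rwa [min_eq_left hsl] at this
  have he : ν.real {z | z.1 ≤ r + 1} = F μ (r + 1) - p := by
    rw [hν, measureReal_restrict_apply MeasurableSet.of_discrete]
    have := hcom.real_left (r + 1) 0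
    rwa [min_eq_right hsr.le] at this
  have hA₀ : ∀ᵐ z ∂ν, avg ν₀ Prod.fst z.1
      = p - (p - F μ r) * (if z.1 ≤ r + 1 then (1 : ℝ) else 0) := by
    filter_upwards [hae] with z hz
    have : ∀ᵐ w ∂ν₀, sg z.1 w.1 = 1 - (if r < w.1 then (1 : ℝ) else 0)
        * (if z.1 ≤ r + 1 then (1 : ℝ) else 0) := by
      filter_upwards [hae₀] with w hw
      unfold sg; split_ifs <;> first | omega | norm_num
    unfold avg
    rw [integral_congr_ae this, integral_sub (integrable_const _)
      ((integrable_ite _ _).mul_const _), integral_mul_const, integral_ite, hd]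
    simp [hmass₀]
  have hB₀ : ∀ᵐ z ∂ν, avg ν₀ Prod.snd z.2 = p := by
    filter_upwards [hae] with z hz
    have : ∀ᵐ w ∂ν₀, sg z.2 w.2 = 1 := by
      filter_upwards [hae₀] with w hw
      unfold sg; split_ifs <;> first | omega | norm_num
    unfold avg
    rw [integral_congr_ae this]
    simp [hmass₀]
  have hA : ∀ m, avg μ Prod.fst m = avg ν Prod.fst m + avg ν₀ Prod.fst m := by
    intro m; rw [← avg_add, hsum]
  have hB : ∀ m, avg μ Prod.snd m = avg ν Prod.snd m + avg ν₀ Prod.snd m := by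
    intro m; rw [← avg_add, hsum]
  have hiteint := integral_ite ν (fun z => z.1 ≤ r + 1)
  rw [he] at hiteint
  have hAν₀ : ∫ z, avg μ Prod.fst z.1 ∂ν₀
      = -(p * (1 - p) - (p - F μ r) * (F μ (r + 1) - p)) := by
    simp_rw [hA]
    rw [integral_add (integrable_avg ν ν₀ Prod.fst) (integrable_avg ν₀ ν₀ Prod.fst),
      integral_avg_self ν₀ Prod.fst, integral_avg_swap ν ν₀ Prod.fst, integral_congr_ae hA₀,
      integral_sub (integrable_const _) ((integrable_ite _ _).const_mul _),
      integral_const_mul, hiteint]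
    simp [hmass]; ring
  have hprodint : ∀ (α β κ : Measure (ℕ × ℕ)) [IsFiniteMeasure α] [IsFiniteMeasure β]
      [IsFiniteMeasure κ],
      Integrable (fun z => avg α Prod.fst z.1 * avg β Prod.snd z.2) κ := by
    intro α β κ _ _ _
    refine integrable_of_abs_le _ _ (α.real Set.univ * β.real Set.univ) fun z => ?_
    rw [abs_mul]
    exact mul_le_mul (abs_avg_le _ _ _) (abs_avg_le _ _ _) (abs_nonneg _) measureReal_nonneg
  have hI₀ : ∫ z, avg μ Prod.fst z.1 * avg μ Prod.snd z.2 ∂ν₀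
      = (1 - p) * (p * (1 - p) - (p - F μ r) * (F μ (r + 1) - p)) := by
    have : ∀ᵐ z ∂ν₀, avg μ Prod.fst z.1 * avg μ Prod.snd z.2
        = avg μ Prod.fst z.1 * (p - 1) := by
      filter_upwards [hae₀] with z hz
      rw [hz.1, avg_snd_zero]
    rw [integral_congr_ae this, integral_mul_const, hAν₀]; ring
  have hI₁ : ∫ z, avg μ Prod.fst z.1 * avg μ Prod.snd z.2 ∂ν
      = ∫ z, avg ν Prod.fst z.1 * avg ν Prod.snd z.2 ∂ν + p ^ 2 * (1 - p)
        - (p - F μ r) * (G μ t ^ 2 - p ^ 2 - (G μ t - p)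
          + (F μ (r + 1) - G μ t) * (G μ t + G μ (t + 1) - 1)) := by
    have : ∀ᵐ z ∂ν, avg μ Prod.fst z.1 * avg μ Prod.snd z.2
        = avg ν Prod.fst z.1 * avg ν Prod.snd z.2 + p * avg ν Prod.fst z.1
          + p * avg ν Prod.snd z.2 + p ^ 2
          - (p - F μ r) * ((if z.1 ≤ r + 1 then (1 : ℝ) else 0) * avg μ Prod.snd z.2) := by
      filter_upwards [hA₀, hB₀] with z h1 h2
      rw [hA, hB, h1, h2]; ring
    have i1 := hprodint ν ν ν
    have i2 := (integrable_avg ν ν Prod.fst).const_mul p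
    have i3 := (integrable_avg ν ν Prod.snd).const_mul p
    have i4 : Integrable (fun _ : ℕ × ℕ => p ^ 2) ν := integrable_const _
    rw [integral_congr_ae this, integral_sub (((i1.fun_add i2).fun_add i3).fun_add i4)
      ((integrable_ite_mul_avg μ ν _).const_mul _), integral_add ((i1.fun_add i2).fun_add i3) i4,
      integral_add (i1.fun_add i2) i3, integral_add i1 i2, integral_const_mul, integral_const_mul,
      integral_const_mul, integral_avg_self ν Prod.fst, integral_avg_self ν Prod.snd,
      integral_avg_snd_fst_le μ hcom (r + 1) t hul hur]
    simp [hmass]; ring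
  have hrho : rhoS μ = 3 * (∫ z, avg μ Prod.fst z.1 * avg μ Prod.snd z.2 ∂ν
      + ∫ z, avg μ Prod.fst z.1 * avg μ Prod.snd z.2 ∂ν₀) := by
    rw [← integral_add_measure (hprodint μ μ ν) (hprodint μ μ ν₀), hsum, ← Pr_Conc_sub_Disc]
    unfold rhoS; ring
  have hcond : (1 - p) ^ 3 * rhoCond μ S11
      = 3 * ∫ z, avg ν Prod.fst z.1 * avg ν Prod.snd z.2 ∂ν := by
    have hq : (1 - p) ≠ 0 := by linarith
    rw [← Pr_Conc_sub_Disc]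
    unfold rhoCond cPr
    rw [Pr_inter_S11, Pr_inter_S11, Pr_S11_s13, hquad, hmass]
    field_simp
  rw [hrho, hcond, hI₀, hI₁]
  ring

end ZIS
end
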